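/- arXiv:0912.2213 — 2 statements merged into one kernel-verified Lean document; each statement's English description precedes it below -/
import Mathlib

section
/- Let I_n^t, V_n^t be a solution of the hpdToda equation. For every t ∈ ℤ, every x ∈ ℂ, and every nonzero y ∈ ℂ such that R_t(y) is invertible, det(X_{t+1}(y) − x·E) = det(X_t(y) − x·E), where E is the N×N identity matrix. In particular the characteristic polynomial of X_t(y), and hence the spectral curve, is invariant under the time evolution t ↦ t+1. -/
/-!
The hpdToda equation implies the Lax equation `L_{t+1} R_{t+M} = R_t L_t`. With
`P = R_{t+M-1} ⋯ R_{t+1}` it gives `X_{t+1} = L_{t+1} R_{t+M} P = R_t (L_t P)`, whereas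
`X_t = (L_t P) R_t`. Since `A B` and `B A` have the same characteristic polynomial, so do `X_{t+1}`
and `X_t`.

For the Lax equation, write `R_t = D(I^t) + S` and `L_t = 1 + S⁻¹ D(V^t)` with `S` the twisted
cyclic shift and `D(f) = diag(f(1), …, f(N))`. Conjugation by `S` shifts the index of a periodic
sequence, so that the two sides agree on the diagonal by the first equation of `IsToda` and on the
subdiagonal by the second.
-/

open Matrix Finset Filter

/-- The matrix `L_t(y)`: `(n,n)`-entry `1`, `(n+1,n)`-entry `V_n^t` for `n = 1,…,N-1`,
`(1,N)`-entry `V_N^t / y` (indices written 1-based; here realized 0-based on `Fin N`). -/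
noncomputable def Ltoda (N : ℕ) (V : ℤ → ℤ → ℂ) (t : ℤ) (y : ℂ) :
    Matrix (Fin N) (Fin N) ℂ := fun i j =>
  (if i = j then 1 else 0) +
  (if (i : ℕ) = (j : ℕ) + 1 then V ((j : ℕ) + 1) t else 0) +
  (if (i : ℕ) = 0 ∧ (j : ℕ) = N - 1 then V N t / y else 0)

/-- The matrix `R_t(y)`: `(n,n)`-entry `I_n^t`, `(n,n+1)`-entry `1` for `n = 1,…,N-1`,
`(N,1)`-entry `y`. -/
noncomputable def Rtoda (N : ℕ) (I : ℤ → ℤ → ℂ) (t : ℤ) (y : ℂ) :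
    Matrix (Fin N) (Fin N) ℂ := fun i j =>
  (if i = j then I ((i : ℕ) + 1) t else 0) +
  (if (j : ℕ) = (i : ℕ) + 1 then 1 else 0) +
  (if (i : ℕ) = N - 1 ∧ (j : ℕ) = 0 then y else 0)

/-- The shift matrix `S(y)`: `(n,n+1)`-entry `1` for `n = 1,…,N-1`, `(N,1)`-entry `y`. -/
def Stoda (N : ℕ) (y : ℂ) : Matrix (Fin N) (Fin N) ℂ := fun i j =>
  (if (j : ℕ) = (i : ℕ) + 1 then 1 else 0) +
  (if (i : ℕ) = N - 1 ∧ (j : ℕ) = 0 then y else 0)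

/-- `Rprod N I t y k = R_{t+k-1}(y) ⋯ R_{t+1}(y) · R_t(y)`. -/
noncomputable def Rprod (N : ℕ) (I : ℤ → ℤ → ℂ) (t : ℤ) (y : ℂ) :
    ℕ → Matrix (Fin N) (Fin N) ℂ
  | 0 => 1
  | k + 1 => Rtoda N I (t + k) y * Rprod N I t y k

/-- `X_t(y) = L_t(y) · R_{t+M-1}(y) ⋯ R_{t+1}(y) · R_t(y)`. -/
noncomputable def Xtoda (N M : ℕ) (I V : ℤ → ℤ → ℂ) (t : ℤ) (y : ℂ) :
    Matrix (Fin N) (Fin N) ℂ :=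
  Ltoda N V t y * Rprod N I t y M

/-- `(I, V)` is a solution of the hungry periodic discrete Toda equation `Toda_{N,M}`. -/
def IsToda (N M : ℕ) (I V : ℤ → ℤ → ℂ) : Prop :=
  ∀ n t : ℤ,
    I n (t + M) = I n t + V n t - V (n - 1) (t + 1) ∧
    V n (t + 1) * I n (t + M) = I (n + 1) t * V n t ∧
    I (n + N) t = I n t ∧ V (n + N) t = V n t

theorem one_add_inv_mul_mul_add_eq_of_semiconjBy {A : Type*} [Ring A] {S : Aˣ} {a a' b v v' w : A}
    (ha : SemiconjBy (S : A) a b) (hw : SemiconjBy (S : A) w v')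
    (hdiag : a' + w = a + v) (hsub : v' * a' = b * v) :
    (1 + (↑S⁻¹ : A) * v') * (a' + S) = (a + S) * (1 + (↑S⁻¹ : A) * v) := by
  have hw' : (↑S⁻¹ : A) * v' * S = w := by
    rw [hw.units_inv_symm_left.eq, mul_assoc, Units.inv_mul, mul_one]
  have hsub' : (↑S⁻¹ : A) * v' * a' = a * ↑S⁻¹ * v := by
    rw [mul_assoc, hsub, ← mul_assoc, ha.units_inv_symm_left.eq]
  calc (1 + (↑S⁻¹ : A) * v') * (a' + S)
      = (a' + (↑S⁻¹ : A) * v' * S) + S + (↑S⁻¹ : A) * v' * a' := by noncomm_ring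
    _ = (a + v) + S + a * ↑S⁻¹ * v := by rw [hw', hdiag, hsub']
    _ = a + S * ↑S⁻¹ * v + S + a * ↑S⁻¹ * v := by rw [Units.mul_inv, one_mul, add_right_comm a]
    _ = (a + S) * (1 + (↑S⁻¹ : A) * v) := by noncomm_ring

theorem det_sub_smul_one {ι K : Type*} [Fintype ι] [DecidableEq ι] [CommRing K]
    (A : Matrix ι ι K) (x : K) :
    (A - x • (1 : Matrix ι ι K)).det = (-1) ^ Fintype.card ι * A.charpoly.eval x := by
  rw [Matrix.eval_charpoly, ← Matrix.det_neg, neg_sub, Matrix.scalar_apply,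
    Matrix.smul_one_eq_diagonal]

section MonomialMatrix

variable {ι K : Type*} [Fintype ι] [DecidableEq ι]

/-- The invertible monomial (generalized permutation) matrix whose only nonzero entry in row `i`
is `w i`, in column `σ i`. -/
def monomialMatrix [Semiring K] (σ : Equiv.Perm ι) (w : ι → Kˣ) : (Matrix ι ι K)ˣ where
  val := Matrix.of fun i j => if σ i = j then (w i : K) else 0
  inv := Matrix.of fun i j => if σ j = i then (↑(w j)⁻¹ : K) else 0
  val_inv := by
    ext i j
    rcases eq_or_ne i j with rfl | hij
    · simp [Matrix.mul_apply]
    · simp [Matrix.mul_apply, hij]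
  inv_val := by
    ext i j
    rcases eq_or_ne i j with rfl | hij
    · simp [Matrix.mul_apply, ← Equiv.eq_symm_apply]
    · simp [Matrix.mul_apply, ← Equiv.eq_symm_apply, hij, hij.symm]

theorem monomialMatrix_apply [Semiring K] (σ : Equiv.Perm ι) (w : ι → Kˣ) (i j : ι) :
    (monomialMatrix σ w : Matrix ι ι K) i j = if σ i = j then (w i : K) else 0 :=
  rfl

theorem monomialMatrix_inv_apply [Semiring K] (σ : Equiv.Perm ι) (w : ι → Kˣ) (i j : ι) :
    (↑(monomialMatrix σ w)⁻¹ : Matrix ι ι K) i j = if σ j = i then (↑(w j)⁻¹ : K) else 0 :=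
  rfl

theorem semiconjBy_monomialMatrix_diagonal [CommSemiring K] (σ : Equiv.Perm ι) (w : ι → Kˣ)
    (d : ι → K) :
    SemiconjBy (monomialMatrix σ w : Matrix ι ι K) (Matrix.diagonal d)
      (Matrix.diagonal (d ∘ σ)) := by
  ext i j
  rw [Matrix.mul_diagonal, Matrix.diagonal_mul, monomialMatrix_apply, Function.comp_apply]
  split_ifs with h
  · rw [h, mul_comm]
  · rw [zero_mul, mul_zero]

end MonomialMatrix

section CyclicShift

theorem val_finRotate {N : ℕ} (i : Fin N) :
    (finRotate N i : ℕ) = if (i : ℕ) = N - 1 then 0 else (i : ℕ) + 1 := by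
  cases N with
  | zero => exact i.elim0
  | succ n => simp only [coe_finRotate, Fin.ext_iff, Fin.val_last, Nat.add_sub_cancel]

theorem apply_finRotate_add_one_of_periodic {α : Type*} {N : ℕ} {f : ℤ → α}
    (hf : Function.Periodic f N) (i : Fin N) :
    f ((finRotate N i : ℕ) + 1) = f ((i : ℕ) + 1 + 1) := by
  rw [val_finRotate]
  split_ifs with hi
  · have hN : ((i : ℕ) : ℤ) + 1 = N := by lia
    rw [hN, add_comm (N : ℤ), hf, Nat.cast_zero, zero_add]
  · rw [Nat.cast_add_one]

variable {K : Type*}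

/-- The diagonal matrix `diag(f(1), …, f(N))` of one period of a sequence, with row `i : Fin N`
standing for the index `i + 1` of the sequence. -/
def periodDiagonal [Zero K] (N : ℕ) (f : ℤ → K) : Matrix (Fin N) (Fin N) K :=
  Matrix.diagonal fun i => f ((i : ℕ) + 1)

/-- The shift matrix `Stoda N y` as a unit of the matrix ring: the cyclic permutation matrix with
the wrap-around entry replaced by `y`. -/
def cyclicShift [Semiring K] (N : ℕ) (y : Kˣ) : (Matrix (Fin N) (Fin N) K)ˣ :=
  monomialMatrix (finRotate N) fun i => if (i : ℕ) = N - 1 then y else 1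

theorem semiconjBy_cyclicShift_periodDiagonal [CommSemiring K] {N : ℕ} (y : Kˣ) {f : ℤ → K}
    (hf : Function.Periodic f N) :
    SemiconjBy (cyclicShift N y : Matrix (Fin N) (Fin N) K) (periodDiagonal N f)
      (periodDiagonal N fun n => f (n + 1)) := by
  have hshift : (fun i : Fin N => f ((i : ℕ) + 1)) ∘ finRotate N =
      fun i : Fin N => f ((i : ℕ) + 1 + 1) :=
    funext (apply_finRotate_add_one_of_periodic hf)
  unfold periodDiagonal
  rw [← hshift]
  exact semiconjBy_monomialMatrix_diagonal _ _ _

theorem coe_cyclicShift (N : ℕ) (y : ℂˣ) :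
    (cyclicShift N y : Matrix (Fin N) (Fin N) ℂ) = Stoda N y := by
  ext i j
  simp only [cyclicShift, monomialMatrix_apply, Stoda, Fin.ext_iff, val_finRotate]
  by_cases hi : (i : ℕ) = N - 1
  · have hij : (j : ℕ) ≠ i + 1 := by lia
    rw [if_neg hij]
    simp [hi, eq_comm]
  · simp [hi, eq_comm]

end CyclicShift

section Toda

variable {N M : ℕ} {I V : ℤ → ℤ → ℂ}

theorem Rtoda_eq_periodDiagonal_add_cyclicShift (I : ℤ → ℤ → ℂ) (t : ℤ) (y : ℂˣ) :
    Rtoda N I t y = periodDiagonal N (fun n => I n t) + cyclicShift N y := by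
  ext i j
  rw [coe_cyclicShift, Matrix.add_apply, periodDiagonal, Matrix.diagonal_apply, Rtoda, Stoda,
    add_assoc]

theorem Ltoda_eq_one_add_cyclicShift_inv_mul (V : ℤ → ℤ → ℂ) (t : ℤ) (y : ℂˣ) :
    Ltoda N V t y = 1 + (↑(cyclicShift N y)⁻¹ : Matrix (Fin N) (Fin N) ℂ) *
      periodDiagonal N fun n => V n t := by
  ext i j
  simp only [Ltoda, Matrix.add_apply, Matrix.one_apply, periodDiagonal, Matrix.mul_diagonal,
    cyclicShift, monomialMatrix_inv_apply, Fin.ext_iff, val_finRotate, add_assoc]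
  congr 1
  by_cases hj : (j : ℕ) = N - 1
  · have hN : ((j : ℕ) : ℤ) + 1 = N := by lia
    have hij : (i : ℕ) ≠ j + 1 := by lia
    rw [hN, if_neg hij]
    simp [hj, eq_comm, div_eq_inv_mul]
  · simp [hj, eq_comm]

theorem IsToda.periodic_I (h : IsToda N M I V) (t : ℤ) : Function.Periodic (fun n => I n t) N :=
  fun n => (h n t).2.2.1

theorem IsToda.periodic_V (h : IsToda N M I V) (t : ℤ) : Function.Periodic (fun n => V n t) N :=
  fun n => (h n t).2.2.2

theorem IsToda.lax_equation (h : IsToda N M I V) (t : ℤ) {y : ℂ} (hy : y ≠ 0) :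
    Ltoda N V (t + 1) y * Rtoda N I (t + M) y = Rtoda N I t y * Ltoda N V t y := by
  lift y to ℂˣ using hy.isUnit
  have hI := semiconjBy_cyclicShift_periodDiagonal y (h.periodic_I t)
  have hV := semiconjBy_cyclicShift_periodDiagonal y ((h.periodic_V (t + 1)).sub_const 1)
  simp only [add_sub_cancel_right] at hV
  have hdiag : periodDiagonal N (fun n => I n (t + M)) +
      periodDiagonal N (fun n => V (n - 1) (t + 1)) =
      periodDiagonal N (fun n => I n t) + periodDiagonal N (fun n => V n t) := by
    simp only [periodDiagonal, Matrix.diagonal_add, (h _ t).1, sub_add_cancel]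
  have hsub : periodDiagonal N (fun n => V n (t + 1)) * periodDiagonal N (fun n => I n (t + M)) =
      periodDiagonal N (fun n => I (n + 1) t) * periodDiagonal N (fun n => V n t) := by
    simp only [periodDiagonal, Matrix.diagonal_mul_diagonal, (h _ t).2.1]
  simp only [Ltoda_eq_one_add_cyclicShift_inv_mul, Rtoda_eq_periodDiagonal_add_cyclicShift]
  exact one_add_inv_mul_mul_add_eq_of_semiconjBy hI hV hdiag hsub

theorem Rprod_succ_eq_mul_Rtoda (N : ℕ) (I : ℤ → ℤ → ℂ) (t : ℤ) (y : ℂ) (k : ℕ) :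
    Rprod N I t y (k + 1) = Rprod N I (t + 1) y k * Rtoda N I t y := by
  induction k with
  | zero => simp [Rprod]
  | succ k ih =>
    have htime : t + ((k + 1 : ℕ) : ℤ) = t + 1 + k := by push_cast; ring
    rw [Rprod, ih, htime, ← mul_assoc, ← Rprod]

end Toda

theorem stmt3_general {N M : ℕ} (hM : 0 < M) {I V : ℤ → ℤ → ℂ} (h : IsToda N M I V) (t : ℤ)
    {y : ℂ} (hy : y ≠ 0) :
    (Xtoda N M I V (t + 1) y).charpoly = (Xtoda N M I V t y).charpoly := by
  obtain ⟨k, rfl⟩ := Nat.exists_eq_add_one.mpr hM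
  have htime : t + 1 + (k : ℤ) = t + ((k + 1 : ℕ) : ℤ) := by push_cast; ring
  calc (Xtoda N (k + 1) I V (t + 1) y).charpoly
      = (Ltoda N V (t + 1) y * Rtoda N I (t + (k + 1 : ℕ)) y * Rprod N I (t + 1) y k).charpoly := by
        rw [Xtoda, Rprod, htime, mul_assoc]
    _ = (Rtoda N I t y * (Ltoda N V t y * Rprod N I (t + 1) y k)).charpoly := by
        rw [h.lax_equation t hy, mul_assoc]
    _ = (Ltoda N V t y * Rprod N I (t + 1) y k * Rtoda N I t y).charpoly :=
        Matrix.charpoly_mul_comm _ _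
    _ = (Xtoda N (k + 1) I V t y).charpoly := by
        rw [Xtoda, Rprod_succ_eq_mul_Rtoda, mul_assoc]

/-- for a solution of hpdToda, the characteristic polynomial of `X_t(y)`
is invariant under the time evolution `t ↦ t+1`, whenever `R_t(y)` is invertible. -/
theorem stmt3 (N M : ℕ) (hN : 0 < N) (hM : 0 < M) (I V : ℤ → ℤ → ℂ)
    (hsol : IsToda N M I V) :
    ∀ (t : ℤ) (x : ℂ) (y : ℂ), y ≠ 0 → IsUnit (Rtoda N I t y) →
      (Xtoda N M I V (t + 1) y - x • (1 : Matrix (Fin N) (Fin N) ℂ)).det =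
      (Xtoda N M I V t y - x • (1 : Matrix (Fin N) (Fin N) ℂ)).det := by
  intro t x y hy _
  rw [det_sub_smul_one, det_sub_smul_one, stmt3_general hM hsol t hy]
end

section
/- Let I_n^t, V_n^t be a solution of the hpdToda equation, let y ∈ ℂ be nonzero, let x ∈ ℂ, and let v ∈ ℂ^N. Then: (i) if X_t(y)·v = x·v, then X_{t+1}(y)·(R_t(y)·v) = x·(R_t(y)·v); (ii) if X_{t+M}(y)·v = x·v, then X_t(y)·(L_t(y)·v) = x·(L_t(y)·v). In other words, R_t(y) and L_t(y) transport eigenvectors of X_t(y) under the time evolutions t ↦ t+1 and t+M ↦ t respectively. -/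
/-!
Let `S = S(y)` be the twisted cyclic shift and let `D(a)` be the diagonal matrix of an `N`-periodic
sequence `a`, so that `S D(a) = D(a(· + 1)) S`. Since `R_t = D(I^t) + S` and `L_t = 1 + S⁻¹ D(V^t)`,
expanding both sides of `L_{t+1} R_{t+M} = R_t L_t` and moving `S⁻¹` to the left shows that this
identity is the hpdToda equation: the first evolution equation compares the diagonal terms, the
second one the terms carrying `S⁻¹`. Consequently
`X_{t+1} R_t = L_{t+1} R_{t+M} R_{t+M-1} ⋯ R_{t+1} R_t = R_t L_t R_{t+M-1} ⋯ R_t = R_t X_t`,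
and pulling `L_t` leftwards through the `M` factors `R` gives `X_t L_t = L_t X_{t+M}`.
-/

open Matrix Finset Filter

lemma mulVec_mulVec_eq_smul_of_mul_eq_mul {R m n : Type*} [CommSemiring R] [Fintype m] [Fintype n]
    {A : Matrix n n R} {B : Matrix m m R} {P : Matrix m n R} (hP : B * P = P * A)
    {x : R} {v : n → R} (hv : A *ᵥ v = x • v) : B *ᵥ (P *ᵥ v) = x • (P *ᵥ v) := by
  rw [mulVec_mulVec, hP, ← mulVec_mulVec, hv, mulVec_smul]

/-- The diagonal matrix `diag(a_1, …, a_N)`, the building block of `L_t(y)` and `R_t(y)` besides the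
shift. As in `Ltoda` and `Rtoda`, row `i : Fin N` carries the 1-based index `i + 1`. -/
def diagToda (N : ℕ) (a : ℤ → ℂ) : Matrix (Fin N) (Fin N) ℂ :=
  diagonal fun i => a ((i : ℕ) + 1)

section Shift

variable {N : ℕ} {a : ℤ → ℂ} {y : ℂ}

lemma Stoda_apply (i j : Fin N) :
    Stoda N y i j = if j = finRotate N i then (if (i : ℕ) = N - 1 then y else 1) else 0 := by
  obtain _ | n := N
  · exact i.elim0
  · simp only [Stoda, Fin.ext_iff, coe_finRotate, Fin.val_last, Nat.add_sub_cancel]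
    have := j.isLt
    split_ifs <;> first | omega | simp

lemma Stoda_mul_transpose_Stoda_inv (hy : y ≠ 0) : Stoda N y * (Stoda N y⁻¹)ᵀ = 1 := by
  ext i k
  by_cases hik : i = k
  · subst hik
    by_cases hi : (i : ℕ) = N - 1 <;> simp [mul_apply, Stoda_apply, hi, hy]
  · simp [mul_apply, Stoda_apply, hik, Ne.symm hik]

lemma inv_Stoda (hy : y ≠ 0) : (Stoda N y)⁻¹ = (Stoda N y⁻¹)ᵀ :=
  inv_eq_right_inv (Stoda_mul_transpose_Stoda_inv hy)

lemma isUnit_det_Stoda (hy : y ≠ 0) : IsUnit (Stoda N y).det :=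
  isUnit_det_of_right_inverse (Stoda_mul_transpose_Stoda_inv hy)

lemma Stoda_mul_diagToda (ha : Function.Periodic a N) :
    Stoda N y * diagToda N a = diagToda N (fun n => a (n + 1)) * Stoda N y := by
  ext i j
  simp only [diagToda, mul_diagonal, diagonal_mul]
  by_cases hsucc : (j : ℕ) = i + 1
  · simp [hsucc, mul_comm]
  by_cases hwrap : (i : ℕ) = N - 1 ∧ (j : ℕ) = 0
  · have hi : ((i : ℕ) : ℤ) + 1 + 1 = 1 + N := by omega
    rw [hi, ha 1, hwrap.2, Nat.cast_zero, zero_add, mul_comm]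
  · simp [Stoda, hsucc, hwrap]

lemma inv_Stoda_mul_diagToda_mul_Stoda (hy : y ≠ 0) (ha : Function.Periodic a N) :
    (Stoda N y)⁻¹ * diagToda N (fun n => a (n + 1)) * Stoda N y = diagToda N a := by
  rw [mul_assoc, ← Stoda_mul_diagToda ha, nonsing_inv_mul_cancel_left _ _ (isUnit_det_Stoda hy)]

lemma diagToda_mul_inv_Stoda (hy : y ≠ 0) (ha : Function.Periodic a N) :
    diagToda N a * (Stoda N y)⁻¹ = (Stoda N y)⁻¹ * diagToda N fun n => a (n + 1) := by
  rw [← inv_Stoda_mul_diagToda_mul_Stoda hy ha,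
    mul_nonsing_inv_cancel_right _ _ (isUnit_det_Stoda hy)]

end Shift

section Factors

variable (N : ℕ) (I V : ℤ → ℤ → ℂ) (t : ℤ) (y : ℂ)

lemma Rtoda_eq_diagToda_add_Stoda : Rtoda N I t y = diagToda N (I · t) + Stoda N y := by
  ext i j
  simp only [Rtoda, Stoda, diagToda, Matrix.add_apply, diagonal_apply, add_assoc]

variable {y} in
lemma Ltoda_eq_one_add_inv_Stoda_mul_diagToda (hy : y ≠ 0) :
    Ltoda N V t y = 1 + (Stoda N y)⁻¹ * diagToda N (V · t) := by
  ext i j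
  rw [inv_Stoda hy, diagToda, Matrix.add_apply, mul_diagonal, transpose_apply, one_apply, Ltoda,
    Stoda, add_assoc, add_mul, ite_mul, ite_mul, one_mul, zero_mul]
  congr 2
  by_cases hwrap : (i : ℕ) = 0 ∧ (j : ℕ) = N - 1
  · have hj : ((j : ℕ) : ℤ) + 1 = N := by omega
    rw [if_pos hwrap, if_pos hwrap.symm, hj, div_eq_inv_mul]
  · rw [if_neg hwrap, if_neg (mt And.symm hwrap)]

lemma Rprod_add_one_mul_Rtoda (k : ℕ) :
    Rprod N I (t + 1) y k * Rtoda N I t y = Rprod N I t y (k + 1) := by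
  induction k with
  | zero => simp [Rprod]
  | succ k ih =>
    have htime : t + 1 + (k : ℤ) = t + (k + 1 : ℕ) := by push_cast; ring
    rw [Rprod, mul_assoc, ih, htime, ← Rprod]

end Factors

namespace IsToda

variable {N M : ℕ} {I V : ℤ → ℤ → ℂ} {y : ℂ}

lemma periodic_I_s7 (h : IsToda N M I V) (t : ℤ) : Function.Periodic (I · t) N :=
  fun n => (h n t).2.2.1

lemma periodic_V_s7 (h : IsToda N M I V) (t : ℤ) : Function.Periodic (V · t) N :=
  fun n => (h n t).2.2.2

lemma diagToda_add_diagToda (h : IsToda N M I V) (t : ℤ) :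
    diagToda N (I · (t + M)) + diagToda N (fun n => V (n - 1) (t + 1)) =
      diagToda N (I · t) + diagToda N (V · t) := by
  simp only [diagToda, diagonal_add]
  congr 1
  funext i
  exact eq_sub_iff_add_eq.mp (h _ t).1

lemma diagToda_mul_diagToda (h : IsToda N M I V) (t : ℤ) :
    diagToda N (V · (t + 1)) * diagToda N (I · (t + M)) =
      diagToda N (fun n => I (n + 1) t) * diagToda N (V · t) := by
  simp only [diagToda, diagonal_mul_diagonal]
  congr 1
  funext i
  exact (h _ t).2.1

lemma Ltoda_mul_Rtoda (h : IsToda N M I V) (t : ℤ) (hy : y ≠ 0) :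
    Ltoda N V (t + 1) y * Rtoda N I (t + M) y = Rtoda N I t y * Ltoda N V t y := by
  have hconj : (Stoda N y)⁻¹ * diagToda N (V · (t + 1)) * Stoda N y =
      diagToda N fun n => V (n - 1) (t + 1) := by
    simpa only [add_sub_cancel_right] using
      inv_Stoda_mul_diagToda_mul_Stoda hy ((h.periodic_V_s7 (t + 1)).sub_const 1)
  have hcomm := diagToda_mul_inv_Stoda hy (h.periodic_I_s7 t)
  have hinv : Stoda N y * (Stoda N y)⁻¹ = 1 := mul_nonsing_inv _ (isUnit_det_Stoda hy)
  simp only [Ltoda_eq_one_add_inv_Stoda_mul_diagToda N V _ hy, Rtoda_eq_diagToda_add_Stoda]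
  set S := Stoda N y
  calc (1 + S⁻¹ * diagToda N (V · (t + 1))) * (diagToda N (I · (t + M)) + S)
      = (diagToda N (I · (t + M)) + S⁻¹ * diagToda N (V · (t + 1)) * S) + S
          + S⁻¹ * (diagToda N (V · (t + 1)) * diagToda N (I · (t + M))) := by noncomm_ring
    _ = (diagToda N (I · t) + diagToda N (V · t)) + S
          + S⁻¹ * (diagToda N (fun n => I (n + 1) t) * diagToda N (V · t)) := by
        rw [hconj, h.diagToda_add_diagToda, h.diagToda_mul_diagToda]
    _ = diagToda N (I · t) + S * S⁻¹ * diagToda N (V · t) + S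
          + diagToda N (I · t) * S⁻¹ * diagToda N (V · t) := by
        rw [hinv, one_mul, hcomm, mul_assoc]
    _ = (diagToda N (I · t) + S) * (1 + S⁻¹ * diagToda N (V · t)) := by noncomm_ring

lemma Rprod_mul_Ltoda (h : IsToda N M I V) (t : ℤ) (hy : y ≠ 0) (k : ℕ) :
    Rprod N I t y k * Ltoda N V t y = Ltoda N V (t + k) y * Rprod N I (t + M) y k := by
  induction k with
  | zero => simp [Rprod]
  | succ k ih =>
    calc Rprod N I t y (k + 1) * Ltoda N V t y
        = Rtoda N I (t + k) y * Ltoda N V (t + k) y * Rprod N I (t + M) y k := by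
          rw [Rprod, mul_assoc, ih, mul_assoc]
      _ = Ltoda N V (t + k + 1) y * (Rtoda N I (t + k + M) y * Rprod N I (t + M) y k) := by
          rw [← h.Ltoda_mul_Rtoda (t + k) hy, mul_assoc]
      _ = Ltoda N V (t + (k + 1 : ℕ)) y * Rprod N I (t + M) y (k + 1) := by
          rw [Rprod, add_right_comm t (k : ℤ) M, Nat.cast_succ, add_assoc t]

lemma Xtoda_mul_Rtoda (h : IsToda N M I V) (t : ℤ) (hy : y ≠ 0) :
    Xtoda N M I V (t + 1) y * Rtoda N I t y = Rtoda N I t y * Xtoda N M I V t y := by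
  rw [Xtoda, Xtoda, mul_assoc, Rprod_add_one_mul_Rtoda, Rprod, ← mul_assoc,
    h.Ltoda_mul_Rtoda t hy, mul_assoc]

lemma Xtoda_mul_Ltoda (h : IsToda N M I V) (t : ℤ) (hy : y ≠ 0) :
    Xtoda N M I V t y * Ltoda N V t y = Ltoda N V t y * Xtoda N M I V (t + M) y := by
  rw [Xtoda, Xtoda, mul_assoc, h.Rprod_mul_Ltoda t hy]

end IsToda

/-- `R_t(y)` and `L_t(y)` transport eigenvectors of `X_t(y)` under the
time evolutions `t ↦ t+1` and `t+M ↦ t` respectively. -/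
theorem stmt7 (N M : ℕ) (hN : 0 < N) (hM : 0 < M) (I V : ℤ → ℤ → ℂ)
    (hsol : IsToda N M I V) (t : ℤ) (y : ℂ) (hy : y ≠ 0) (x : ℂ) (v : Fin N → ℂ) :
    ((Xtoda N M I V t y).mulVec v = x • v →
      (Xtoda N M I V (t + 1) y).mulVec ((Rtoda N I t y).mulVec v) =
        x • (Rtoda N I t y).mulVec v) ∧
    ((Xtoda N M I V (t + M) y).mulVec v = x • v →
      (Xtoda N M I V t y).mulVec ((Ltoda N V t y).mulVec v) =
        x • (Ltoda N V t y).mulVec v) := by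
  constructor
  · exact mulVec_mulVec_eq_smul_of_mul_eq_mul (hsol.Xtoda_mul_Rtoda t hy)
  · exact mulVec_mulVec_eq_smul_of_mul_eq_mul (hsol.Xtoda_mul_Ltoda t hy)
end
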